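/- Let K be an imaginary quadratic field (a number field of degree 2 over ℚ with no real embeddings) with ring of integers 𝒪, and for x ∈ 𝒪 let N(x) = |Norm_{K/ℚ}(x)| denote the absolute value of the field norm. There exists a constant C > 0, depending only on K, with the following property: for every nonzero integral 𝒪-ideal I and every α ∈ 𝒪 satisfying N(α) = min{N(α + i) : i ∈ I}, and for all i₁, i₂ ∈ I with N(i₁) > N(i₂), one has N(i₁) - N(i₂) ≥ C·N(α). -/

import Mathlib

/-!
Since `i₁, i₂ ∈ I`, both norms are multiples of `𝔑(I)`, the absolute norm of `I`, so a positive
difference of norms is at least `𝔑(I)`. It remains to bound `N(α)` by a constant times `𝔑(I)`.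
Minkowski's theorem gives `0 ≠ ω ∈ I` with `N(ω) ≤ M 𝔑(I)` (`exists_mem_ideal_norm_le`). As `𝓞 K`
is a full lattice in `K`, every `z ∈ K` lies within bounded norm `D` of some `q ∈ 𝓞 K`
(`exists_norm_sub_le`). For `z = α / ω`, the element `α - q ω` of the class of `α` modulo `I` has
norm at most `D N(ω) ≤ D M 𝔑(I)`, and minimality gives the same bound for `N(α)`.
-/

open NumberField

/-- The absolute value of the `K/ℚ` norm of an algebraic integer. -/
noncomputable def absNormElt (K : Type*) [Field K] [NumberField K] (x : 𝓞 K) : ℤ :=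
  |Algebra.norm ℤ x|

/-- Minkowski's bound: a nonzero ideal contains a nonzero element whose norm is bounded by a
constant times the norm of the ideal. -/
lemma exists_mem_ideal_norm_le (K : Type*) [Field K] [NumberField K] :
    ∃ M : ℝ, 0 ≤ M ∧ ∀ I : Ideal (𝓞 K), I ≠ ⊥ → ∃ ω ∈ I, ω ≠ 0 ∧
      (absNormElt K ω : ℝ) ≤ M * (Ideal.absNorm I : ℝ) := by
  refine ⟨(4 / Real.pi) ^ InfinitePlace.nrComplexPlaces K *
    ((Module.finrank ℚ K).factorial / (Module.finrank ℚ K : ℝ) ^ (Module.finrank ℚ K) *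
      Real.sqrt |(discr K : ℝ)|), by positivity, fun I hI => ?_⟩
  let J : (nonZeroDivisors (Ideal (𝓞 K))) := ⟨I, mem_nonZeroDivisors_iff_ne_zero.mpr hI⟩
  obtain ⟨_, ⟨a, ha, rfl⟩, h_nz, h_nm⟩ :=
    exists_ne_zero_mem_ideal_of_norm_le_mul_sqrt_discr K (FractionalIdeal.mk0 K J)
  refine ⟨a, ha, ?_, ?_⟩
  · rintro rfl
    exact h_nz (map_zero _)
  · rw [FractionalIdeal.coe_mk0, FractionalIdeal.coeIdeal_absNorm, Rat.cast_natCast,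
      Algebra.linearMap_apply] at h_nm
    have h : (absNormElt K a : ℝ) = ((|Algebra.norm ℚ (algebraMap (𝓞 K) K a)| : ℚ) : ℝ) := by
      rw [absNormElt, ← Algebra.coe_norm_int]
      push_cast
      rfl
    rw [h]
    refine h_nm.trans (le_of_eq ?_)
    simp only [J]
    ring

/-- The ring of integers is coarsely dense in `K` for the norm: subtracting from `z` its
coordinatewise floor in an integral basis leaves an element all of whose conjugates are bounded by
a constant. -/
lemma exists_norm_sub_le (K : Type*) [Field K] [NumberField K] :
    ∃ D : ℝ, 0 ≤ D ∧ ∀ z : K, ∃ q : 𝓞 K,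
      ((|Algebra.norm ℚ (z - algebraMap (𝓞 K) K q)| : ℚ) : ℝ) ≤ D := by
  let b := RingOfIntegers.basis K
  let B := integralBasis K
  refine ⟨∏ w : InfinitePlace K, (∑ j, w (B j)) ^ w.mult, by positivity, fun z => ?_⟩
  refine ⟨∑ j, ⌊B.repr z j⌋ • b j, ?_⟩
  have hz : z - algebraMap (𝓞 K) K (∑ j, ⌊B.repr z j⌋ • b j)
      = ∑ j, ((Int.fract (B.repr z j) : ℚ) : K) * B j := by
    conv_lhs => rw [← B.sum_repr z]
    rw [map_sum, ← Finset.sum_sub_distrib]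
    refine Finset.sum_congr rfl fun j _ => ?_
    have hb : algebraMap (𝓞 K) K (b j) = B j := (integralBasis_apply K j).symm
    rw [B.sum_repr z, map_zsmul, hb, Int.fract, Algebra.smul_def, zsmul_eq_mul]
    push_cast
    simp [sub_mul]
  rw [hz, ← InfinitePlace.prod_eq_abs_norm]
  refine Finset.prod_le_prod (fun _ _ => by positivity) fun w _ => ?_
  refine pow_le_pow_left₀ (apply_nonneg _ _) ?_ _
  refine (w.1.sum_le _ _).trans (Finset.sum_le_sum fun j _ => ?_)
  change w _ ≤ _
  rw [map_mul]
  refine mul_le_of_le_one_left (apply_nonneg _ _) ?_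
  rw [← w.norm_embedding_eq, map_ratCast, Complex.norm_ratCast]
  rw [abs_of_nonneg (by exact_mod_cast Int.fract_nonneg _)]
  exact_mod_cast (Int.fract_lt_one _).le

/-- Let `K` be an imaginary quadratic field with ring of integers `𝒪`, and write
`N(x) = |Norm_{K/ℚ}(x)|`. There is a constant `C > 0`, depending only on `K`, such that
whenever `α ∈ 𝒪` has minimal norm in its residue class modulo a nonzero ideal `I`, then
for all `i₁, i₂ ∈ I` with `N(i₁) > N(i₂)` one has `N(i₁) - N(i₂) ≥ C·N(α)`. -/
theorem norm_gap_of_minimal_in_class (K : Type*) [Field K] [NumberField K]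
    (hdeg : Module.finrank ℚ K = 2) (hcomplex : IsEmpty (K →+* ℝ)) :
    ∃ C : ℝ, 0 < C ∧ ∀ I : Ideal (𝓞 K), I ≠ ⊥ → ∀ α : 𝓞 K,
      (∀ i ∈ I, absNormElt K α ≤ absNormElt K (α + i)) →
      ∀ i₁ ∈ I, ∀ i₂ ∈ I, absNormElt K i₂ < absNormElt K i₁ →
        C * (absNormElt K α : ℝ) ≤ (absNormElt K i₁ : ℝ) - (absNormElt K i₂ : ℝ) := by
  obtain ⟨M, hM, hMink⟩ := exists_mem_ideal_norm_le K
  obtain ⟨D, hD, hcov⟩ := exists_norm_sub_le K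
  refine ⟨1 / (D * M + 1), by positivity, fun I hI α hα i₁ h₁ i₂ h₂ hlt => ?_⟩
  have hgap : (Ideal.absNorm I : ℝ) ≤ (absNormElt K i₁ : ℝ) - (absNormElt K i₂ : ℝ) := by
    have hdvd : (Ideal.absNorm I : ℤ) ∣ absNormElt K i₁ - absNormElt K i₂ :=
      dvd_sub ((dvd_abs _ _).mpr (Ideal.absNorm_dvd_norm_of_mem h₁))
        ((dvd_abs _ _).mpr (Ideal.absNorm_dvd_norm_of_mem h₂))
    exact_mod_cast Int.le_of_dvd (sub_pos.mpr hlt) hdvd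
  have hmin : (absNormElt K α : ℝ) ≤ D * M * Ideal.absNorm I := by
    obtain ⟨ω, hω, hω0, hωM⟩ := hMink I hI
    have hω0' : algebraMap (𝓞 K) K ω ≠ 0 := by simpa using hω0
    obtain ⟨q, hq⟩ := hcov (algebraMap (𝓞 K) K α / algebraMap (𝓞 K) K ω)
    have hle := hα (-(q * ω)) (I.neg_mem (I.mul_mem_left q hω))
    have hcast (x : 𝓞 K) : (absNormElt K x : ℝ)
        = ((|Algebra.norm ℚ (algebraMap (𝓞 K) K x)| : ℚ) : ℝ) := by
      rw [absNormElt, ← Algebra.coe_norm_int]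
      push_cast
      rfl
    have hmul : (absNormElt K (α + -(q * ω)) : ℝ)
        = ((|Algebra.norm ℚ (algebraMap (𝓞 K) K α / algebraMap (𝓞 K) K ω
            - algebraMap (𝓞 K) K q)| : ℚ) : ℝ) * absNormElt K ω := by
      rw [hcast, hcast, ← Rat.cast_mul, ← abs_mul, ← map_mul, sub_mul, div_mul_cancel₀ _ hω0',
        map_add, map_neg, map_mul, sub_eq_add_neg]
    have hωnn : (0 : ℝ) ≤ absNormElt K ω := by
      exact_mod_cast abs_nonneg (Algebra.norm ℤ ω)
    calc (absNormElt K α : ℝ) ≤ absNormElt K (α + -(q * ω)) := by exact_mod_cast hle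
      _ ≤ D * absNormElt K ω := hmul ▸ mul_le_mul_of_nonneg_right hq hωnn
      _ ≤ D * (M * Ideal.absNorm I) := mul_le_mul_of_nonneg_left hωM hD
      _ = D * M * Ideal.absNorm I := by ring
  refine le_trans ?_ hgap
  rw [one_div, inv_mul_le_iff₀ (by positivity)]
  have : (0 : ℝ) ≤ Ideal.absNorm I := Nat.cast_nonneg _
  linarith
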